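/- arXiv:2512.18042 — 3 statements merged into one kernel-verified Lean document; each statement's English description precedes it below -/
import Mathlib

section
/- Let G be a finite group, H ≤ G a subgroup, ψ ∈ Irr(H), and suppose χ = ψ^G (the induced character) is irreducible. Then for every field automorphism τ of ℚ(ψ) fixing ℚ(χ) pointwise, the Galois conjugate ψ^τ is also an irreducible constituent of the restriction χ_H, and consequently χ(1) ≥ [ℚ(ψ) : ℚ(χ)] · ψ(1). -/
open scoped Classical

/-- The field of values of a character `χ`. -/
noncomputable def Qfield {G : Type*} (χ : G → ℂ) : IntermediateField ℚ ℂ :=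
  IntermediateField.adjoin ℚ (Set.range χ)

/-- The `n`-th cyclotomic field inside `ℂ`. -/
noncomputable def Qcyc (n : ℕ) : IntermediateField ℚ ℂ :=
  IntermediateField.adjoin ℚ {x : ℂ | x ^ n = 1}

/-- The conductor of an abelian number field. -/
noncomputable def condF (F : IntermediateField ℚ ℂ) : ℕ :=
  sInf {n : ℕ | 0 < n ∧ F ≤ Qcyc n}

/-- Relative degree `[L : K]` via absolute degrees. -/
noncomputable def relDeg (K L : IntermediateField ℚ ℂ) : ℕ :=
  Module.finrank ℚ L / Module.finrank ℚ K

/-- `χ` is the character of a `d`-dimensional irreducible complex representation. -/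
def IsIrrCharOfDeg (G : Type*) [Group G] (χ : G → ℂ) (d : ℕ) : Prop :=
  ∃ ρ : Representation ℂ G (Fin d → ℂ),
    IsSimpleModule (MonoidAlgebra ℂ G) ρ.asModule ∧
    ∀ g, χ g = LinearMap.trace ℂ (Fin d → ℂ) (ρ g)

/-- `χ` is an irreducible complex character of `G`. -/
def IsIrrChar (G : Type*) [Group G] (χ : G → ℂ) : Prop :=
  ∃ d, IsIrrCharOfDeg G χ d

/-- `χ` is a complex character of `G`. -/
def IsChar (G : Type*) [Group G] (χ : G → ℂ) : Prop :=
  ∃ (d : ℕ) (ρ : Representation ℂ G (Fin d → ℂ)),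
    ∀ g, χ g = LinearMap.trace ℂ (Fin d → ℂ) (ρ g)

/-- Inner product of class functions. -/
noncomputable def innerChar {H : Type*} [Fintype H] (α β : H → ℂ) : ℂ :=
  (Fintype.card H : ℂ)⁻¹ * ∑ h, α h * (starRingEnd ℂ) (β h)

/-- The induced character `ψ^G`. -/
noncomputable def inducedChar {G : Type*} [Group G] [Fintype G] (H : Subgroup G)
    (ψ : H → ℂ) (g : G) : ℂ :=
  (Nat.card H : ℂ)⁻¹ *
    ∑ x : G, if h : x⁻¹ * g * x ∈ H then ψ ⟨x⁻¹ * g * x, h⟩ else 0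

/-!
An automorphism of `ℚ(ψ)` over `ℚ(χ)` extends to an automorphism `σ` of `ℂ`, and applying `σ` to
the matrix entries of a representation affording `ψ` gives an irreducible representation affording
`ψ^σ`. By Frobenius reciprocity `⟨χ_H, ψ⟩ = ⟨χ, χ⟩ ≠ 0`. This inner product is a natural number and
`σ` fixes the values of `χ`, so `⟨χ_H, ψ^σ⟩ = σ ⟨χ_H, ψ⟩ = ⟨χ_H, ψ⟩ ≠ 0`. The embeddings of `ℚ(ψ)`
into `ℂ` over `ℚ(χ)` extend to `ℂ` in the same way and give `[ℚ(ψ) : ℚ(χ)]` distinct conjugates of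
`ψ`; they are afforded by pairwise non-isomorphic simple submodules of `χ_H`, which are therefore
independent, and each of them has dimension `ψ(1)`.
-/

open Module

theorem nonempty_algEquiv_of_isTranscendenceBasis {K L₁ L₂ ι : Type*} [Field K] [Field L₁]
    [Field L₂] [Algebra K L₁] [Algebra K L₂] [IsAlgClosed L₁] [IsAlgClosed L₂] {x : ι → L₁}
    {y : ι → L₂} (hx : IsTranscendenceBasis K x) (hy : IsTranscendenceBasis K y) :
    Nonempty (L₁ ≃ₐ[K] L₂) := by
  have := IsAlgClosed.isAlgClosure_of_transcendence_basis x hx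
  have := IsAlgClosed.isAlgClosure_of_transcendence_basis y hy
  let e : Algebra.adjoin K (Set.range x) ≃ₐ[K] Algebra.adjoin K (Set.range y) :=
    hx.1.aevalEquiv.symm.trans hy.1.aevalEquiv
  refine ⟨AlgEquiv.ofRingEquiv (f := IsAlgClosure.equivOfEquiv L₁ L₂ e.toRingEquiv) fun c => ?_⟩
  have h := IsAlgClosure.equivOfEquiv_algebraMap L₁ L₂ e.toRingEquiv (algebraMap K _ c)
  rwa [← IsScalarTower.algebraMap_apply, AlgEquiv.coe_ringEquiv, e.commutes,
    ← IsScalarTower.algebraMap_apply] at h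

theorem exists_algEquiv_comp_eq {F L E₁ E₂ : Type*} [Field F] [Field L] [Field E₁]
    [Field E₂] [Algebra F L] [Algebra F E₁] [Algebra F E₂] [Algebra.IsAlgebraic F L]
    [IsAlgClosed E₁] [IsAlgClosed E₂] (e : E₁ ≃ₐ[F] E₂) (φ₁ : L →ₐ[F] E₁) (φ₂ : L →ₐ[F] E₂) :
    ∃ σ : E₁ ≃ₐ[F] E₂, ∀ x, σ (φ₁ x) = φ₂ x := by
  -- A transcendence basis over `F` is still one over `L`, however `L` is embedded.
  let := φ₁.toRingHom.toAlgebra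
  let := φ₂.toRingHom.toAlgebra
  have : IsScalarTower F L E₁ := .of_algebraMap_eq' φ₁.comp_algebraMap.symm
  have : IsScalarTower F L E₂ := .of_algebraMap_eq' φ₂.comp_algebraMap.symm
  obtain ⟨s, hs⟩ := exists_isTranscendenceBasis F E₁
  obtain ⟨σ⟩ := nonempty_algEquiv_of_isTranscendenceBasis
    ((Algebra.IsAlgebraic.isTranscendenceBasis_iff F L).1 hs)
    ((Algebra.IsAlgebraic.isTranscendenceBasis_iff F L).1 (e.isTranscendenceBasis hs))
  exact ⟨σ.restrictScalars F, σ.commutes⟩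

theorem isSemisimple_of_pow_eq_one {k V : Type*} [Field k] [AddCommGroup V] [Module k V]
    {f : End k V} {n : ℕ} (hn : (n : k) ≠ 0) (hf : f ^ n = 1) : f.IsSemisimple :=
  End.isSemisimple_of_squarefree_aeval_eq_zero
    (Polynomial.separable_X_pow_sub_C (1 : k) hn one_ne_zero).squarefree (by simp [hf])

theorem trace_eq_sum_of_apply_basis {R M ι : Type*} [CommRing R] [AddCommGroup M] [Module R M]
    [Fintype ι] (b : Basis ι R M) {f : End R M} {μ : ι → R} (hf : ∀ i, f (b i) = μ i • b i) :
    LinearMap.trace R M f = ∑ i, μ i := by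
  rw [LinearMap.trace_eq_matrix_trace R b]
  simp [Matrix.trace, LinearMap.toMatrix_apply, hf]

section Eigenvalues

variable {k V : Type*} [Field k] [IsAlgClosed k] [AddCommGroup V] [Module k V]
  [FiniteDimensional k V]

theorem exists_basis_hasEigenvector_of_isSemisimple {f : End k V} (hf : f.IsSemisimple) :
    ∃ (b : Basis (Fin (finrank k V)) k V) (μ : Fin (finrank k V) → k),
      ∀ i, f.HasEigenvector (μ i) (b i) := by
  have hint : DirectSum.IsInternal f.eigenspace :=
    DirectSum.isInternal_submodule_of_iSupIndep_of_iSup_eq_top f.eigenspaces_iSupIndep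
      hf.iSup_eigenspace_eq_top
  let b := hint.collectedBasis fun μ => Free.chooseBasis k (f.eigenspace μ)
  have := Module.Finite.finite_basis b
  let e := Finite.equivFinOfCardEq (finrank_eq_nat_card_basis b).symm
  exact ⟨b.reindex e, fun i => (e.symm i).1, fun i => ⟨by simp [b], Basis.ne_zero _ i⟩⟩

variable {G : Type*} [Group G] [Finite G] [NeZero (Nat.card G : k)]

theorem character_eq_sum_eigenvalues (ρ : Representation k G V) (g : G) :
    ∃ μ : Fin (finrank k V) → k, (∀ i, μ i ^ Nat.card G = 1) ∧ ρ.character g = ∑ i, μ i ∧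
      ρ.character g⁻¹ = ∑ i, (μ i)⁻¹ := by
  have hpow : ρ g ^ Nat.card G = 1 := by rw [← map_pow, pow_card_eq_one', map_one]
  obtain ⟨b, μ, hμ⟩ := exists_basis_hasEigenvector_of_isSemisimple
    (isSemisimple_of_pow_eq_one (NeZero.ne (Nat.card G : k)) hpow)
  have hroot (i) : μ i ^ Nat.card G = 1 := by
    have h := (hμ i).pow_apply (Nat.card G)
    rw [hpow] at h
    exact smul_left_injective k (b.ne_zero i) (by simpa using h.symm)
  have hne (i) : μ i ≠ 0 := (IsUnit.of_pow_eq_one (hroot i) Nat.card_pos.ne').ne_zero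
  refine ⟨μ, hroot, trace_eq_sum_of_apply_basis b fun i => (hμ i).apply_eq_smul,
    trace_eq_sum_of_apply_basis b fun i => ?_⟩
  rw [eq_inv_smul_iff₀ (hne i), ← map_smul, ← (hμ i).apply_eq_smul, ρ.inv_self_apply]

theorem isIntegral_character (ρ : Representation k G V) (g : G) :
    IsIntegral ℤ (ρ.character g) := by
  obtain ⟨μ, hμ, h, -⟩ := character_eq_sum_eigenvalues ρ g
  rw [h]
  exact IsIntegral.sum _ fun i _ => .of_pow Nat.card_pos (hμ i ▸ isIntegral_one)

end Eigenvalues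

theorem character_inv_eq_conj {G V : Type*} [Group G] [Finite G] [AddCommGroup V] [Module ℂ V]
    [FiniteDimensional ℂ V] (ρ : Representation ℂ G V) (g : G) :
    ρ.character g⁻¹ = starRingEnd ℂ (ρ.character g) := by
  obtain ⟨μ, hμ, h, h'⟩ := character_eq_sum_eigenvalues ρ g
  rw [h, h', map_sum]
  exact Finset.sum_congr rfl fun i _ =>
    Complex.inv_eq_conj (Complex.norm_eq_one_of_pow_eq_one (hμ i) Nat.card_pos.ne')

instance finiteDimensional_Qfield_character {G V : Type*} [Group G] [Finite G] [AddCommGroup V]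
    [Module ℂ V] [FiniteDimensional ℂ V] (ρ : Representation ℂ G V) :
    FiniteDimensional ℚ (Qfield ρ.character) :=
  IntermediateField.finiteDimensional_adjoin <| by
    rintro _ ⟨g, rfl⟩
    exact (isIntegral_character ρ g).tower_top

theorem innerChar_character {G V W : Type*} [Group G] [Fintype G] [AddCommGroup V] [Module ℂ V]
    [FiniteDimensional ℂ V] [AddCommGroup W] [Module ℂ W] [FiniteDimensional ℂ W]
    (π : Representation ℂ G V) (ρ : Representation ℂ G W) :
    innerChar π.character ρ.character = finrank ℂ (ρ.IntertwiningMap π) := by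
  let _ : Invertible (Nat.card G : ℂ) := invertibleOfNonzero (Nat.cast_ne_zero.2 Nat.card_pos.ne')
  rw [← Representation.card_inv_mul_sum_char_mul_char_eq_finrank, innerChar,
    Nat.card_eq_fintype_card]
  simp only [character_inv_eq_conj]

theorem innerChar_self_eq_zero_iff {H : Type*} [Fintype H] {α : H → ℂ} :
    innerChar α α = 0 ↔ α = 0 := by
  rcases isEmpty_or_nonempty H with _ | _
  · simp [innerChar, Subsingleton.elim α 0]
  simp only [innerChar, Complex.mul_conj, Complex.normSq_eq_norm_sq]
  rw [mul_eq_zero_iff_left (by simp)]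
  norm_cast
  rw [Finset.sum_eq_zero_iff_of_nonneg (by intros; positivity)]
  simp [funext_iff]

theorem inducedChar_one {G : Type*} [Group G] [Fintype G] (H : Subgroup G) (ψ : H → ℂ) :
    inducedChar H ψ 1 = H.index * ψ 1 := by
  have hG : (Nat.card G : ℂ) = Nat.card H * H.index := mod_cast H.card_mul_index.symm
  have hH : (Nat.card H : ℂ) ≠ 0 := Nat.cast_ne_zero.2 Nat.card_pos.ne'
  have hval (x : G) : (if h : x⁻¹ * 1 * x ∈ H then ψ ⟨x⁻¹ * 1 * x, h⟩ else 0) = ψ 1 :=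
    (dif_pos (by simp)).trans (congrArg ψ (Subtype.ext (by simp)))
  simp only [inducedChar, hval, Finset.sum_const, Finset.card_univ, nsmul_eq_mul,
    ← Nat.card_eq_fintype_card, hG]
  rw [mul_assoc, inv_mul_cancel_left₀ hH]

theorem innerChar_inducedChar {G : Type*} [Group G] [Fintype G] (H : Subgroup G) {χ : G → ℂ}
    (hχ : ∀ g x, χ (x * g * x⁻¹) = χ g) (ψ : H → ℂ) :
    innerChar χ (inducedChar H ψ) = innerChar (fun h : H => χ h) ψ := by
  let ψ₀ : G → ℂ := fun g => if h : g ∈ H then ψ ⟨g, h⟩ else 0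
  have hconj (x : G) : ∑ g, χ g * starRingEnd ℂ (ψ₀ (x⁻¹ * g * x)) =
      ∑ g, χ g * starRingEnd ℂ (ψ₀ g) := by
    refine (Fintype.sum_equiv (MulAut.conj x).toEquiv _ _ fun g => ?_).symm
    have hg : x⁻¹ * (x * g * x⁻¹) * x = g := by group
    simp [hχ, hg]
  have hsupp : ∑ g, χ g * starRingEnd ℂ (ψ₀ g) = ∑ h : H, χ h * starRingEnd ℂ (ψ h) := by
    refine (Finset.sum_of_injOn Subtype.val Subtype.val_injective.injOn (by simp) ?_ ?_).symm
    · intro g _ hg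
      simp_all [ψ₀]
    · simp [ψ₀]
  calc innerChar χ (inducedChar H ψ)
    _ = (Fintype.card G : ℂ)⁻¹ * ∑ g, χ g * starRingEnd ℂ
          ((Nat.card H : ℂ)⁻¹ * ∑ x, ψ₀ (x⁻¹ * g * x)) := rfl
    _ = (Fintype.card G : ℂ)⁻¹ * ((Nat.card H : ℂ)⁻¹ *
          ∑ x, ∑ g, χ g * starRingEnd ℂ (ψ₀ (x⁻¹ * g * x))) := by
      rw [Finset.sum_comm]
      simp [Finset.mul_sum, mul_left_comm]
    _ = innerChar (fun h : H => χ h) ψ := by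
      simp [hconj, hsupp, innerChar, mul_left_comm]

theorem innerChar_restrict_ne_zero {G V : Type*} [Group G] [Fintype G] (H : Subgroup G)
    [AddCommGroup V] [Module ℂ V] (π : Representation ℂ G V) {ψ : H → ℂ} (hψ : ψ 1 ≠ 0)
    (hπ : π.character = inducedChar H ψ) :
    innerChar (fun h : H => π.character h) ψ ≠ 0 := by
  rw [← innerChar_inducedChar H (fun g x => π.char_conj g x), ← hπ, Ne, innerChar_self_eq_zero_iff]
  intro h0
  have h1 : 0 = H.index * ψ 1 := by rw [← inducedChar_one, ← hπ, h0, Pi.zero_apply]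
  exact mul_ne_zero (Nat.cast_ne_zero.2 H.index_ne_zero_of_finite) hψ h1.symm

section Semilinear

open Representation MonoidAlgebra

variable {k l G V W : Type*} [Field k] [Field l] [Monoid G] [AddCommGroup V] [Module k V]
  [AddCommGroup W] [Module l W] {σ : k →+* l} {ρ : Representation k G V} {ρ' : Representation l G W}
  {f : V →ₛₗ[σ] W}

theorem asAlgebraHom_mapRingHom_apply (hf : ∀ g v, f (ρ g v) = ρ' g (f v))
    (r : MonoidAlgebra k G) (v : V) :
    ρ'.asAlgebraHom (mapRingHom G σ r) (f v) = f (ρ.asAlgebraHom r v) := by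
  induction r using MonoidAlgebra.induction_linear with
  | zero => simp
  | add r s hr hs => simp [hr, hs]
  | single g c => simp [hf, map_smulₛₗ f]

theorem isIrreducible_of_semilinear_bijective [ρ.IsIrreducible] (hσ : Function.Surjective σ)
    (hf : ∀ g v, f (ρ g v) = ρ' g (f v)) (hbij : Function.Bijective f) : ρ'.IsIrreducible := by
  have : RingHomSurjective (mapRingHom G σ) := ⟨map_surjective (σ : k →+ l) hσ⟩
  let F : ρ.asModule →ₛₗ[mapRingHom G σ] ρ'.asModule :=
    { toFun v := ρ'.asModuleEquiv.symm (f (ρ.asModuleEquiv v))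
      map_add' := by simp
      map_smul' r v := ρ'.asModuleEquiv.injective <| by
        simp [asModuleEquiv_map_smul, asAlgebraHom_mapRingHom_apply hf] }
  rw [irreducible_iff_isSimpleModule_asModule, ← F.isSimpleModule_iff_of_bijective]
  · infer_instance
  · exact ρ'.asModuleEquiv.symm.bijective.comp (hbij.comp ρ.asModuleEquiv.bijective)

end Semilinear

section GaloisTwist

variable {k l G ι : Type*} [Field k] [Field l] [Monoid G] [Fintype ι] [DecidableEq ι]

/-- The Galois conjugate `ρ^σ` of a matrix representation `ρ`, obtained by applying `σ` to all
matrix entries. -/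
noncomputable def galoisTwist (σ : k →+* l) (ρ : Representation k G (ι → k)) :
    Representation l G (ι → l) where
  toFun g := Matrix.toLin' ((LinearMap.toMatrix' (ρ g)).map σ)
  map_one' := by simp [End.one_eq_id]
  map_mul' g h := by
    rw [map_mul, LinearMap.toMatrix'_mul, Matrix.map_mul, Matrix.toLin'_mul, End.mul_eq_comp]

theorem galoisTwist_apply (σ : k →+* l) (ρ : Representation k G (ι → k)) (g : G) :
    galoisTwist σ ρ g = Matrix.toLin' ((LinearMap.toMatrix' (ρ g)).map σ) :=
  rfl

theorem galoisTwist_apply_comp (σ : k →+* l) (ρ : Representation k G (ι → k)) (g : G)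
    (v : ι → k) : galoisTwist σ ρ g (σ ∘ v) = σ ∘ ρ g v := by
  conv_rhs => rw [← Matrix.toLin'_toMatrix' (ρ g)]
  ext i
  exact (σ.map_mulVec (LinearMap.toMatrix' (ρ g)) v i).symm

theorem character_galoisTwist (σ : k →+* l) (ρ : Representation k G (ι → k)) (g : G) :
    (galoisTwist σ ρ).character g = σ (ρ.character g) := by
  rw [Representation.character, Representation.character, galoisTwist_apply, Matrix.trace_toLin'_eq,
    ← AddMonoidHom.map_trace, LinearMap.trace_eq_matrix_trace k (Pi.basisFun k ι),
    LinearMap.toMatrix_eq_toMatrix']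

theorem isIrreducible_galoisTwist {σ : k →+* l} (hσ : Function.Bijective σ)
    (ρ : Representation k G (ι → k)) [ρ.IsIrreducible] : (galoisTwist σ ρ).IsIrreducible :=
  let f : (ι → k) →ₛₗ[σ] (ι → l) :=
    { toFun v := σ ∘ v
      map_add' v w := by ext; simp
      map_smul' c v := by ext; simp }
  isIrreducible_of_semilinear_bijective (f := f) hσ.2
    (fun g v => (galoisTwist_apply_comp σ ρ g v).symm) (hσ.comp_left)

end GaloisTwist

theorem innerChar_galoisTwist {G V ι : Type*} [Group G] [Fintype G] [AddCommGroup V] [Module ℂ V]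
    [FiniteDimensional ℂ V] [Fintype ι] [DecidableEq ι] (π : Representation ℂ G V)
    (ρ : Representation ℂ G (ι → ℂ)) {σ : ℂ →+* ℂ}
    (hσ : ∀ g, σ (π.character g) = π.character g) :
    innerChar π.character (galoisTwist σ ρ).character = innerChar π.character ρ.character := by
  calc innerChar π.character (galoisTwist σ ρ).character
    _ = σ (innerChar π.character ρ.character) := by
      simp only [innerChar, ← character_inv_eq_conj]
      simp only [character_galoisTwist, map_mul, map_inv₀, map_natCast, map_sum, hσ]
    _ = innerChar π.character ρ.character := by rw [innerChar_character, map_natCast]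

theorem iSupIndep_of_pairwise_isEmpty_linearEquiv {R M ι : Type*} [Ring R] [AddCommGroup M]
    [Module R M] {S : ι → Submodule R M} [hS : ∀ i, IsSimpleModule R (S i)]
    (hne : Pairwise fun i j => IsEmpty (S i ≃ₗ[R] S j)) : iSupIndep S := by
  intro i
  by_contra hdisj
  have hle : S i ≤ sSup (S '' {j | j ≠ i}) := by
    rw [sSup_image]
    exact (isSimpleModule_iff_isAtom.1 (hS i)).not_disjoint_iff_le.1 hdisj
  have : ∀ T : (S '' {j | j ≠ i}), IsSimpleModule R T := by
    rintro ⟨_, j, -, rfl⟩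
    exact hS j
  obtain ⟨_, ⟨j, hji, rfl⟩, ⟨e⟩⟩ := Submodule.linearEquiv_of_le_sSup _ _ hle
  exact (hne hji.symm).false e

theorem sum_finrank_le_of_iSupIndep {k R M ι : Type*} [Field k] [Ring R] [Algebra k R]
    [AddCommGroup M] [Module k M] [Module R M] [IsScalarTower k R M] [FiniteDimensional k M]
    [Fintype ι] {S : ι → Submodule R M} (hS : iSupIndep S) :
    ∑ i, finrank k (S i) ≤ finrank k M := by
  let f : (DirectSum ι fun i => S i) →ₗ[k] M :=
    (DFinsupp.lsum ℕ (M := fun i => S i) fun i => (S i).subtype).restrictScalars k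
  have hfin (i) : FiniteDimensional k (S i) :=
    inferInstanceAs (FiniteDimensional k ((S i).restrictScalars k))
  rw [← finrank_directSum]
  exact LinearMap.finrank_le_finrank_of_injective (f := f) hS.dfinsupp_lsum_injective

section Constituents

open Representation

theorem character_eq_of_linearEquiv {k G V W : Type*} [Field k] [Monoid G] [AddCommGroup V]
    [Module k V] [AddCommGroup W] [Module k W] {π : Representation k G V}
    {ρ : Representation k G W} (e : π.asModule ≃ₗ[MonoidAlgebra k G] ρ.asModule) :
    π.character = ρ.character :=
  char_iso <| IntertwiningMap.ofBijective
    ((IntertwiningMap.equivLinearMapAsModule π ρ).symm e.toLinearMap) e.bijective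

variable {G V W : Type*} [Group G] [Fintype G] [AddCommGroup V] [Module ℂ V]
  [FiniteDimensional ℂ V] [AddCommGroup W] [Module ℂ W]

theorem exists_injective_of_innerChar_ne_zero [FiniteDimensional ℂ W] {π : Representation ℂ G V}
    {ρ : Representation ℂ G W} [ρ.IsIrreducible]
    (h : innerChar π.character ρ.character ≠ 0) :
    ∃ f : ρ.asModule →ₗ[MonoidAlgebra ℂ G] π.asModule, Function.Injective f := by
  rw [innerChar_character, Nat.cast_ne_zero, ← Nat.pos_iff_ne_zero] at h
  have := nontrivial_of_finrank_pos h
  obtain ⟨f, hf⟩ := exists_ne (0 : ρ.IntertwiningMap π)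
  exact ⟨IntertwiningMap.equivLinearMapAsModule ρ π f,
    (IsIrreducible.injective_or_eq_zero f).resolve_right hf⟩

theorem sum_finrank_le_of_innerChar_ne_zero (π : Representation ℂ G V) {ι : Type*} [Fintype ι]
    {W : ι → Type*} [∀ i, AddCommGroup (W i)] [∀ i, Module ℂ (W i)]
    [∀ i, FiniteDimensional ℂ (W i)] (θ : ∀ i, Representation ℂ G (W i))
    [∀ i, (θ i).IsIrreducible] (hinj : Function.Injective fun i => (θ i).character)
    (hne : ∀ i, innerChar π.character (θ i).character ≠ 0) :
    ∑ i, finrank ℂ (W i) ≤ finrank ℂ V := by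
  choose f hf using fun i => exists_injective_of_innerChar_ne_zero (hne i)
  let e (i) := LinearEquiv.ofInjective (f i) (hf i)
  have hsimple (i) : IsSimpleModule (MonoidAlgebra ℂ G) (f i).range := .congr (e i).symm
  have hind : iSupIndep fun i => (f i).range :=
    iSupIndep_of_pairwise_isEmpty_linearEquiv fun i j hij => ⟨fun g =>
      hij <| hinj <| character_eq_of_linearEquiv <| (e i).trans (g.trans (e j).symm)⟩
  have : FiniteDimensional ℂ π.asModule := ‹FiniteDimensional ℂ V›
  calc ∑ i, finrank ℂ (W i)
    _ = ∑ i, finrank ℂ (f i).range :=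
      Finset.sum_congr rfl fun i _ => ((e i).restrictScalars ℂ).finrank_eq
    _ ≤ finrank ℂ V := sum_finrank_le_of_iSupIndep hind

end Constituents

section FieldOfValues

open IntermediateField

theorem eqOn_Qfield {G : Type*} {ψ : G → ℂ} {σ σ' : ℂ →+* ℂ} (h : ∀ g, σ (ψ g) = σ' (ψ g)) :
    Set.EqOn σ σ' (Qfield ψ) := by
  refine adjoin_le_iff (T := (σ.eqLocusField σ').toIntermediateField (by simp)).2 ?_
  rintro _ ⟨g, rfl⟩
  exact h g

variable {K L : IntermediateField ℚ ℂ} [FiniteDimensional ℚ L]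

instance finiteDimensional_extendScalars (h : K ≤ L) : FiniteDimensional K (extendScalars h) :=
  have : FiniteDimensional ℚ (extendScalars h) := ‹FiniteDimensional ℚ L›
  .right ℚ K _

theorem relDeg_eq_card_algHom (h : K ≤ L) :
    relDeg K L = Fintype.card (extendScalars h →ₐ[K] ℂ) := by
  have : FiniteDimensional ℚ K := .of_injective (inclusion h).toLinearMap (inclusion_injective h)
  have hmul : finrank ℚ K * finrank K (extendScalars h) = finrank ℚ L :=
    finrank_mul_finrank ℚ K (extendScalars h)
  rw [AlgHom.card, relDeg, ← hmul, Nat.mul_div_cancel_left _ finrank_pos]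

end FieldOfValues

section InducedCharacter

open IntermediateField

variable {G V ι : Type*} [Group G] [Fintype G] {H : Subgroup G} [AddCommGroup V] [Module ℂ V]
  [FiniteDimensional ℂ V] [Fintype ι] {π : Representation ℂ G V}
  {ρ : Representation ℂ H (ι → ℂ)} [ρ.IsIrreducible]

theorem innerChar_restrict_galoisTwist_ne_zero [DecidableEq ι]
    (hπ : π.character = inducedChar H ρ.character) (σ : ℂ →ₐ[Qfield π.character] ℂ) :
    innerChar (fun h : H => π.character h) (galoisTwist (σ : ℂ →+* ℂ) ρ).character ≠ 0 := by
  have hσ (g) : σ (π.character g) = π.character g :=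
    σ.commutes ⟨_, subset_adjoin ℚ _ ⟨g, rfl⟩⟩
  have : Nontrivial (ι → ℂ) :=
    have : IsSimpleModule (MonoidAlgebra ℂ H) ρ.asModule := inferInstance
    IsSimpleModule.nontrivial (MonoidAlgebra ℂ H) ρ.asModule
  have hρ : ρ.character 1 ≠ 0 := by
    rw [ρ.char_one, Nat.cast_ne_zero]
    exact finrank_pos.ne'
  have h := innerChar_galoisTwist (π.comp H.subtype) ρ (σ := σ) fun h => hσ h
  exact h.trans_ne (innerChar_restrict_ne_zero H π hρ hπ)

theorem relDeg_mul_card_le_finrank (hπ : π.character = inducedChar H ρ.character)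
    (hsub : Qfield π.character ≤ Qfield ρ.character) :
    relDeg (Qfield π.character) (Qfield ρ.character) * Fintype.card ι ≤ finrank ℂ V := by
  choose σ hσ using exists_algEquiv_comp_eq (F := Qfield π.character) (E₁ := ℂ) (E₂ := ℂ)
    .refl (extendScalars hsub).val
  have hirr (φ) : (galoisTwist (σ φ : ℂ →+* ℂ) ρ).IsIrreducible :=
    isIrreducible_galoisTwist (σ φ).bijective ρ
  have hinj : Function.Injective fun φ => (galoisTwist (σ φ : ℂ →+* ℂ) ρ).character := by
    intro φ φ' h
    have hval (g) : σ φ (ρ.character g) = σ φ' (ρ.character g) := by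
      simpa [character_galoisTwist] using congrFun h g
    ext x
    have hx : σ φ x = σ φ' x := eqOn_Qfield (σ := σ φ) (σ' := σ φ') hval x.2
    exact (hσ φ x).symm.trans (hx.trans (hσ φ' x))
  have hle := sum_finrank_le_of_innerChar_ne_zero (π.comp H.subtype) _ hinj fun φ =>
    innerChar_restrict_galoisTwist_ne_zero hπ (σ φ).toAlgHom
  simpa [relDeg_eq_card_algHom hsub] using hle

end InducedCharacter

theorem stmt6_general {G V : Type*} [Group G] [Fintype G] (H : Subgroup G) [AddCommGroup V]
    [Module ℂ V] [FiniteDimensional ℂ V] (π : Representation ℂ G V) (ψ : H → ℂ) (m : ℕ)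
    (hψ : IsIrrCharOfDeg H ψ m) (hind : ∀ g, π.character g = inducedChar H ψ g)
    (hsub : Qfield π.character ≤ Qfield ψ) (τ : Qfield ψ ≃ₐ[ℚ] Qfield ψ)
    (hτ : ∀ (x : ℂ) (hx : x ∈ Qfield π.character), τ ⟨x, hsub hx⟩ = ⟨x, hsub hx⟩) (ψτ : H → ℂ)
    (hψτ : ∀ h, ∃ hm : ψ h ∈ Qfield ψ, ψτ h = (τ ⟨ψ h, hm⟩ : Qfield ψ)) :
    (IsIrrChar H ψτ ∧ innerChar (fun h : H => π.character h) ψτ ≠ 0) ∧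
      relDeg (Qfield π.character) (Qfield ψ) * m ≤ finrank ℂ V := by
  obtain ⟨ρ, hρ, hρψ⟩ := hψ
  obtain rfl : ψ = ρ.character := funext hρψ
  have : ρ.IsIrreducible := ρ.irreducible_iff_isSimpleModule_asModule.2 hρ
  have hπ : π.character = inducedChar H ρ.character := funext hind
  let φ : IntermediateField.extendScalars hsub →ₐ[Qfield π.character] ℂ :=
    { (Qfield ρ.character).val.comp τ.toAlgHom with
      commutes' x := congrArg Subtype.val (hτ x x.2) }
  obtain ⟨σ, hσ⟩ := exists_algEquiv_comp_eq .refl (IntermediateField.val _) φ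
  have hirr := isIrreducible_galoisTwist (σ := (σ : ℂ →+* ℂ)) σ.bijective ρ
  obtain rfl : ψτ = (galoisTwist (σ : ℂ →+* ℂ) ρ).character := by
    ext h
    obtain ⟨hm, hval⟩ := hψτ h
    rw [hval, character_galoisTwist]
    exact (hσ ⟨_, hm⟩).symm
  refine ⟨⟨⟨m, _, ?_, fun _ => rfl⟩,
    innerChar_restrict_galoisTwist_ne_zero hπ σ.toAlgHom⟩, ?_⟩
  · exact (Representation.irreducible_iff_isSimpleModule_asModule _).1 hirr
  · simpa using relDeg_mul_card_le_finrank hπ hsub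

theorem stmt6 {G : Type*} [Group G] [Fintype G] (H : Subgroup G)
    (ψ : ↥H → ℂ) (χ : G → ℂ) (m n : ℕ)
    (hψ : IsIrrCharOfDeg ↥H ψ m) (hχ : IsIrrCharOfDeg G χ n)
    (hind : ∀ g, χ g = inducedChar H ψ g)
    (hsub : Qfield χ ≤ Qfield ψ)
    (τ : (Qfield ψ) ≃ₐ[ℚ] (Qfield ψ))
    (hτ : ∀ (x : ℂ) (hx : x ∈ Qfield χ), τ ⟨x, hsub hx⟩ = ⟨x, hsub hx⟩)
    (ψτ : ↥H → ℂ)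
    (hψτ : ∀ h : ↥H, ∃ hm : ψ h ∈ Qfield ψ, ψτ h = ((τ ⟨ψ h, hm⟩ : Qfield ψ) : ℂ)) :
    (IsIrrChar ↥H ψτ ∧ innerChar (fun h : ↥H => χ (h : G)) ψτ ≠ 0) ∧
      relDeg (Qfield χ) (Qfield ψ) * m ≤ n := by
  obtain ⟨π, -, hπ⟩ := hχ
  obtain rfl : χ = π.character := funext hπ
  simpa using stmt6_general H π ψ m hψ hind hsub τ hτ ψτ hψτ
end

section
/- Suppose that for every finite group G and every nonlinear χ ∈ Irr(G) there exist a proper subgroup H < G and ψ ∈ Irr(H) with ℚ(χ) ⊆ ℚ(ψ) and [ℚ(ψ) : ℚ(χ)] ≤ χ(1)/ψ(1). Then for every finite group G and χ ∈ Irr(G), the group G contains an element of order c(χ) (Feit's conjecture). -/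
open scoped Classical

/-!
Replacing `χ` by characters of smaller and smaller subgroups, the hypothesis embeds `ℚ(χ)` in the
field of values of a linear character `f` of some subgroup `K`. The image of `f` is a commutative
group, so it contains an element `f g` whose order is the exponent of the image. Hence all values
of `f` are roots of unity of order dividing `orderOf g`, and `ℚ(χ) ⊆ ℚ(ζ_{orderOf g})`.

Since `ℚ(ζ_a) ∩ ℚ(ζ_b) = ℚ(ζ_{gcd(a, b)})`, the conductor of a subfield of `ℚ(ζ_m)` divides `m`.
So `c(χ)` divides `orderOf g`, and a power of `g` has order `c(χ)`.
-/

universe u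

section CyclotomicFields

open IntermediateField Module

theorem totient_gcd_mul_totient_lcm (a b : ℕ) :
    (a.gcd b).totient * (a.lcm b).totient = a.totient * b.totient := by
  rcases a.eq_zero_or_pos with rfl | ha
  · simp
  have gcd_gcd_lcm : (a.gcd b).gcd (a.lcm b) = a.gcd b :=
    Nat.gcd_eq_left ((Nat.gcd_dvd_left a b).trans (Nat.dvd_lcm_left a b))
  have h := Nat.totient_gcd_mul_totient_mul (a.gcd b) (a.lcm b)
  rw [gcd_gcd_lcm, Nat.gcd_mul_lcm, Nat.totient_gcd_mul_totient_mul] at h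
  exact (Nat.eq_of_mul_eq_mul_right (Nat.gcd_pos_of_pos_left b ha) h).symm

theorem finrank_inf_mul_finrank_sup_le {K L : Type*} [Field K] [Field L] [Algebra K L]
    (E F : IntermediateField K L) :
    finrank K ↥(E ⊓ F) * finrank K ↥(E ⊔ F) ≤ finrank K E * finrank K F := by
  have relfinrank_sup_le :
      (E ⊓ F).relfinrank (E ⊔ F) ≤ (E ⊓ F).relfinrank E * (E ⊓ F).relfinrank F := by
    rw [relfinrank_eq_finrank_of_le inf_le_left, relfinrank_eq_finrank_of_le inf_le_right,
      relfinrank_eq_finrank_of_le (inf_le_left.trans le_sup_left),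
      ← extendScalars_sup inf_le_left inf_le_right]
    exact finrank_sup_le _ _
  rw [← finrank_bot_mul_relfinrank (inf_le_left.trans le_sup_left : E ⊓ F ≤ E ⊔ F),
    ← finrank_bot_mul_relfinrank (inf_le_left : E ⊓ F ≤ E),
    ← finrank_bot_mul_relfinrank (inf_le_right : E ⊓ F ≤ F), mul_mul_mul_comm, ← mul_assoc]
  gcongr

instance isCyclotomicExtension_Qcyc (n : ℕ) [NeZero n] :
    IsCyclotomicExtension {n} ℚ (Qcyc n) := by
  have h := isCyclotomicExtension_adjoin_of_exists_isPrimitiveRoot {n} ℚ ℂ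
    fun m _ hm ↦ ⟨_, Complex.isPrimitiveRoot_exp m hm⟩
  have roots_eq : {b : ℂ | ∃ m ∈ ({n} : Set ℕ), m ≠ 0 ∧ b ^ m = 1} = {x : ℂ | x ^ n = 1} := by
    simp [NeZero.ne n]
  rwa [roots_eq] at h

theorem finrank_Qcyc (n : ℕ) [NeZero n] : finrank ℚ (Qcyc n) = n.totient :=
  IsCyclotomicExtension.finrank _ (Polynomial.cyclotomic.irreducible_rat (NeZero.pos n))

theorem finrank_Qcyc_sup_Qcyc (a b : ℕ) [NeZero a] [NeZero b] :
    finrank ℚ ↥(Qcyc a ⊔ Qcyc b) = (a.lcm b).totient := by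
  have hpos : 0 < a.lcm b := Nat.lcm_pos (NeZero.pos a) (NeZero.pos b)
  have : NeZero (a.lcm b) := ⟨hpos.ne'⟩
  have : IsCyclotomicExtension {a.lcm b} ℚ ↥(Qcyc a ⊔ Qcyc b) :=
    isCyclotomicExtension_lcm_sup ℚ ℂ a b (Qcyc a) (Qcyc b)
      (h₁ := isCyclotomicExtension_Qcyc a) (h₂ := isCyclotomicExtension_Qcyc b)
  exact IsCyclotomicExtension.finrank _ (Polynomial.cyclotomic.irreducible_rat hpos)

theorem Qcyc_le_Qcyc_of_dvd {m n : ℕ} (h : m ∣ n) : Qcyc m ≤ Qcyc n :=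
  adjoin.mono ℚ _ _ fun x (hx : x ^ m = 1) ↦
    orderOf_dvd_iff_pow_eq_one.1 ((orderOf_dvd_of_pow_eq_one hx).trans h)

theorem Qcyc_gcd (a b : ℕ) [NeZero a] [NeZero b] : Qcyc (a.gcd b) = Qcyc a ⊓ Qcyc b := by
  have : NeZero (a.gcd b) := ⟨(Nat.gcd_pos_of_pos_left b (NeZero.pos a)).ne'⟩
  have : FiniteDimensional ℚ (Qcyc a) := IsCyclotomicExtension.finite_of_singleton a ℚ _
  have lcm_pos : 0 < (a.lcm b).totient :=
    Nat.totient_pos.2 (Nat.lcm_pos (NeZero.pos a) (NeZero.pos b))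
  refine eq_of_le_of_finrank_le
    (le_inf (Qcyc_le_Qcyc_of_dvd (Nat.gcd_dvd_left a b))
      (Qcyc_le_Qcyc_of_dvd (Nat.gcd_dvd_right a b)))
    (Nat.le_of_mul_le_mul_right ?_ lcm_pos)
  calc finrank ℚ ↥(Qcyc a ⊓ Qcyc b) * (a.lcm b).totient
      = finrank ℚ ↥(Qcyc a ⊓ Qcyc b) * finrank ℚ ↥(Qcyc a ⊔ Qcyc b) := by
        rw [finrank_Qcyc_sup_Qcyc]
    _ ≤ finrank ℚ (Qcyc a) * finrank ℚ (Qcyc b) := finrank_inf_mul_finrank_sup_le _ _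
    _ = (a.gcd b).totient * (a.lcm b).totient := by
        rw [finrank_Qcyc, finrank_Qcyc, totient_gcd_mul_totient_lcm]
    _ = finrank ℚ (Qcyc (a.gcd b)) * (a.lcm b).totient := by rw [finrank_Qcyc]

theorem condF_dvd_of_le_Qcyc {F : IntermediateField ℚ ℂ} {n : ℕ} (h : F ≤ Qcyc n) :
    condF F ∣ n := by
  rcases n.eq_zero_or_pos with rfl | hn
  · exact dvd_zero _
  obtain ⟨cond_pos, le_cond⟩ : condF F ∈ {k : ℕ | 0 < k ∧ F ≤ Qcyc k} :=
    Nat.sInf_mem ⟨n, hn, h⟩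
  have : NeZero n := ⟨hn.ne'⟩
  have : NeZero (condF F) := ⟨cond_pos.ne'⟩
  have le_gcd : condF F ≤ (condF F).gcd n :=
    Nat.sInf_le ⟨Nat.gcd_pos_of_pos_left n cond_pos, Qcyc_gcd (condF F) n ▸ le_inf le_cond h⟩
  exact Nat.gcd_eq_left_iff_dvd.1 ((Nat.gcd_le_left n cond_pos).antisymm le_gcd)

theorem exists_orderOf_eq_condF {M : Type*} [Monoid M] {g : M} (hg : IsOfFinOrder g)
    {F : IntermediateField ℚ ℂ} (h : F ≤ Qcyc (orderOf g)) : ∃ x : M, orderOf x = condF F :=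
  ⟨_, orderOf_pow_orderOf_div hg.orderOf_pos.ne' (condF_dvd_of_le_Qcyc h)⟩

end CyclotomicFields

section LinearCharacters

theorem exists_forall_map_pow_orderOf_eq_one {M N : Type*} [Monoid M] [CommMonoid N]
    (hM : Monoid.ExponentExists M) (f : M →* N) : ∃ g : M, ∀ x, f x ^ orderOf g = 1 := by
  have range_exponentExists : Monoid.ExponentExists (MonoidHom.mrange f) := by
    obtain ⟨n, hn, h⟩ := hM
    refine ⟨n, hn, ?_⟩
    rintro ⟨_, x, rfl⟩
    exact Subtype.ext (by simp [← map_pow, h])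
  obtain ⟨⟨_, g, rfl⟩, hg⟩ := Monoid.exists_orderOf_eq_exponent range_exponentExists
  refine ⟨g, fun x ↦ orderOf_dvd_iff_pow_eq_one.1 ?_⟩
  calc orderOf (f x) = orderOf (f.mrangeRestrict x) := orderOf_submonoid (f.mrangeRestrict x)
    _ ∣ Monoid.exponent (MonoidHom.mrange f) := Monoid.order_dvd_exponent _
    _ = orderOf (f g) := by rw [← hg, ← orderOf_submonoid]
    _ ∣ orderOf g := orderOf_map_dvd f g

theorem exists_Qfield_le_Qcyc_orderOf {G : Type*} [Monoid G] (hG : Monoid.ExponentExists G)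
    (f : G →* ℂ) : ∃ g : G, Qfield f ≤ Qcyc (orderOf g) := by
  obtain ⟨g, hg⟩ := exists_forall_map_pow_orderOf_eq_one hG f
  exact ⟨g, IntermediateField.adjoin.mono ℚ _ _ (Set.range_subset_iff.2 hg)⟩

theorem trace_eq_det_of_unique {ι R M : Type*} [Unique ι] [CommRing R] [AddCommGroup M]
    [Module R M] (b : Module.Basis ι R M) (f : M →ₗ[R] M) :
    LinearMap.trace R M f = LinearMap.det f := by
  rw [LinearMap.trace_eq_matrix_trace R b, ← LinearMap.det_toMatrix b, Matrix.det_unique]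
  exact Fintype.sum_unique _

variable {G : Type*} [Group G] {χ : G → ℂ}

theorem IsIrrCharOfDeg.exists_monoidHom (h : IsIrrCharOfDeg G χ 1) : ∃ f : G →* ℂ, ⇑f = χ := by
  obtain ⟨ρ, -, hρ⟩ := h
  refine ⟨LinearMap.det.comp ρ, funext fun g ↦ ?_⟩
  rw [hρ, trace_eq_det_of_unique (Pi.basisFun ℂ (Fin 1))]
  rfl

theorem IsIrrCharOfDeg.deg_pos {d : ℕ} (h : IsIrrCharOfDeg G χ d) : 0 < d := by
  obtain ⟨ρ, simple, -⟩ := h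
  have : Nontrivial (Fin d → ℂ) := IsSimpleModule.nontrivial (MonoidAlgebra ℂ G) ρ.asModule
  refine Nat.pos_of_ne_zero ?_
  rintro rfl
  exact not_subsingleton (Fin 0 → ℂ) inferInstance

end LinearCharacters

theorem stmt9_general
    (hyp : ∀ (G : Type u) [Group G] [Finite G] (χ : G → ℂ) (d : ℕ),
      IsIrrCharOfDeg G χ d → 1 < d →
      ∃ (H : Subgroup G) (ψ : ↥H → ℂ), H ≠ ⊤ ∧ IsIrrChar ↥H ψ ∧ Qfield χ ≤ Qfield ψ)
    (G : Type u) [Group G] [Finite G] (χ : G → ℂ) (hχ : IsIrrChar G χ) :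
    ∃ g : G, orderOf g = condF (Qfield χ) := by
  suffices ∃ g : G, Qfield χ ≤ Qcyc (orderOf g) from
    this.elim fun g hg ↦ exists_orderOf_eq_condF (isOfFinOrder_of_finite g) hg
  induction hn : Nat.card G using Nat.strong_induction_on generalizing G with
  | _ n ih =>
    subst hn
    obtain ⟨d, hd⟩ := hχ
    rcases (Nat.succ_le_of_lt hd.deg_pos).eq_or_lt with rfl | nonlinear
    · obtain ⟨f, rfl⟩ := hd.exists_monoidHom
      exact exists_Qfield_le_Qcyc_orderOf Monoid.ExponentExists.of_finite f
    · obtain ⟨H, ψ, H_ne_top, hψ, χ_le_ψ⟩ := hyp G χ d hd nonlinear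
      have card_lt : Nat.card H < Nat.card G :=
        H.card_le_card_group.lt_of_ne (mt H.eq_top_of_card_eq H_ne_top)
      obtain ⟨g, hg⟩ := ih _ card_lt H ψ hψ rfl
      exact ⟨g, χ_le_ψ.trans (by rwa [Subgroup.orderOf_coe])⟩

theorem stmt9
    (hyp : ∀ (G : Type) [Group G] [Fintype G] (χ : G → ℂ) (d : ℕ),
      IsIrrCharOfDeg G χ d → 1 < d →
      ∃ (H : Subgroup G) (ψ : ↥H → ℂ) (e : ℕ), H ≠ ⊤ ∧ IsIrrCharOfDeg ↥H ψ e ∧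
        Qfield χ ≤ Qfield ψ ∧ relDeg (Qfield χ) (Qfield ψ) * e ≤ d) :
    ∀ (G : Type) [Group G] [Fintype G] (χ : G → ℂ), IsIrrChar G χ →
      ∃ g : G, orderOf g = condF (Qfield χ) := by
  intro G _ _ χ
  refine stmt9_general (fun G _ _ χ d hχ hd ↦ ?_) G χ
  obtain ⟨H, ψ, e, hH, hψ, hle, -⟩ := @hyp G _ (Fintype.ofFinite G) χ d hχ hd
  exact ⟨H, ψ, hH, ⟨e, hψ⟩, hle⟩
end

section
/- Let p be a prime, G a finite group, P a Sylow p-subgroup, and χ ∈ Irr(G) of degree coprime to p. Suppose α := lev_p(χ) ≥ 2 and that ℚ_p(χ_P) ⊆ ℚ(ζ_{p^α}), and suppose the number of linear constituents of the restriction χ_P of p-rationality level α is not divisible by p. Then ℚ(ζ_{p^α}) = ℚ_p(χ_P), i.e., every automorphism of ℚ(ζ_{p^α}) fixing ℚ_p(χ_P) is trivial. -/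
open scoped Classical

/-! An automorphism `σ` of `ℚ(ζ_{p^α})` raises `p^α`-th roots of unity to a power `m`, and `m ≡ 1`
modulo `p` when `σ` fixes `ζ_p`. If `σ` also fixes the values of a function `ψ` on a `p`-group, then
`θ ↦ θ ^ m` permutes the linear constituents of level `α`, which for `α ≥ 2` are those of order
`p^α`. This permutation has `p`-power period on a set of size prime to `p`, so it fixes some
`θ`; then `m ≡ 1` modulo `p^α`, that is, `σ = 1`. -/

open IsCyclotomicExtension.Rat (galEquivZMod galEquivZMod_apply_of_pow_eq)

theorem pow_pow_prime_pow_modEq_one {p m : ℕ} (hm : m ≡ 1 [MOD p]) (k : ℕ) :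
    m ^ p ^ k ≡ 1 [MOD p ^ k] := by
  have h : (p : ℤ) ∣ (m : ℤ) - (1 : ℕ) := Nat.modEq_iff_dvd.mp hm.symm
  have h' := dvd_sub_pow_of_dvd_sub h k
  refine (Nat.ModEq.symm <| Nat.modEq_iff_dvd.mpr ?_).of_dvd (pow_dvd_pow p k.le_succ)
  simpa using h'

theorem modEq_one_of_pow_mem {A : Type*} [LeftCancelMonoid A] {p k m : ℕ} [Fact p.Prime]
    {S : Set A} (hS : ∀ a ∈ S, orderOf a = p ^ k) (hpow : ∀ a ∈ S, a ^ m ∈ S)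
    (hcard : ¬ p ∣ Nat.card S) (hm : m ≡ 1 [MOD p]) : m ≡ 1 [MOD p ^ k] := by
  have : Finite S := Nat.finite_of_card_ne_zero fun h => hcard (h ▸ dvd_zero p)
  have : Fintype S := Fintype.ofFinite S
  let f : Function.End S := Set.MapsTo.restrict (· ^ m) S S hpow
  have hperiod : f ^ p ^ k = 1 := by
    funext a
    apply Subtype.ext
    calc ((f ^ p ^ k) a : A) = (· ^ m)^[p ^ k] (a : A) := by
          rw [hom_coe_pow (fun g : Function.End S => g) rfl (fun _ _ => rfl)]
          exact Set.MapsTo.coe_iterate_restrict hpow a _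
      _ = (a : A) ^ m ^ p ^ k := by rw [pow_iterate]
      _ = (a : A) ^ 1 := by
          rw [pow_eq_pow_iff_modEq, hS a a.2]
          exact pow_pow_prime_pow_modEq_one hm k
      _ = a := pow_one _
  obtain ⟨a, ha⟩ : (Function.fixedPoints f).Nonempty := by
    by_contra hempty
    have hmod := Equiv.Perm.card_fixedPoints_modEq hperiod
    rw [Fintype.card_eq_zero_iff.mpr
      (Set.isEmpty_coe_sort.mpr (Set.not_nonempty_iff_eq_empty.mp hempty))] at hmod
    exact hcard (Nat.card_eq_fintype_card (α := S) ▸ (Nat.modEq_zero_iff_dvd).mp hmod)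
  have ha' : (a : A) ^ m = (a : A) ^ 1 := (congrArg Subtype.val ha).trans (pow_one _).symm
  rwa [pow_eq_pow_iff_modEq, hS a a.2] at ha'

theorem algebraMap_mem_of_forall_fixing {F L E : Type*} [Field F] [Field L] [Field E]
    [Algebra F L] [Algebra F E] [Algebra L E] [IsScalarTower F L E] [IsGalois F L]
    {K : IntermediateField F E}
    (h : ∀ σ : Gal(L/F), (∀ x : L, algebraMap L E x ∈ K → σ x = x) → σ = 1) (x : L) :
    algebraMap L E x ∈ K := by
  let K' : IntermediateField F L := K.comap (IsScalarTower.toAlgHom F L E)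
  have hbot : K'.fixingSubgroup = ⊥ := (Subgroup.eq_bot_iff_forall _).mpr fun σ hσ =>
    h σ fun y hy => (IntermediateField.mem_fixingSubgroup_iff K' σ).mp hσ y hy
  have htop : K' = ⊤ := by
    rw [← InfiniteGalois.fixedField_fixingSubgroup K', hbot, IntermediateField.fixedField_bot]
  exact (htop ▸ IntermediateField.mem_top : x ∈ K')

namespace Qcyc

theorem mem_of_pow_eq_one {n : ℕ} {z : ℂ} (hz : z ^ n = 1) : z ∈ Qcyc n :=
  IntermediateField.subset_adjoin _ _ hz

theorem mono {m n : ℕ} (h : m ∣ n) : Qcyc m ≤ Qcyc n :=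
  IntermediateField.adjoin.mono _ _ _ fun z (hz : z ^ m = 1) => by
    obtain ⟨r, rfl⟩ := h
    exact (pow_mul z m r).trans (by rw [hz, one_pow])

theorem exists_isPrimitiveRoot_of_le {m : ℕ} (hm : m ≠ 0) {K : IntermediateField ℚ ℂ}
    (h : Qcyc m ≤ K) :
    ∃ ζ : K, IsPrimitiveRoot ζ m ∧ (ζ : ℂ) ∈ Qcyc m := by
  have hz := Complex.isPrimitiveRoot_exp m hm
  have hmem := mem_of_pow_eq_one hz.pow_eq_one
  exact ⟨⟨_, h hmem⟩, IsPrimitiveRoot.coe_submonoidClass_iff.mp hz, hmem⟩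

variable {n : ℕ} [NeZero n]

theorem eq_adjoin_of_isPrimitiveRoot {z : ℂ} (hz : IsPrimitiveRoot z n) :
    Qcyc n = IntermediateField.adjoin ℚ {z} := by
  refine le_antisymm (IntermediateField.adjoin_le_iff.mpr fun x hx => ?_)
    (IntermediateField.adjoin_simple_le_iff.mpr (mem_of_pow_eq_one hz.pow_eq_one))
  obtain ⟨i, -, rfl⟩ := hz.eq_pow_of_pow_eq_one hx
  exact pow_mem (IntermediateField.mem_adjoin_simple_self ℚ z) i

instance isCyclotomicExtension : IsCyclotomicExtension {n} ℚ (Qcyc n) :=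
  have hz := Complex.isPrimitiveRoot_exp n (NeZero.ne n)
  (IntermediateField.isCyclotomicExtension_singleton_iff_eq_adjoin n ℚ ℂ _ hz).mpr
    (eq_adjoin_of_isPrimitiveRoot hz)

instance numberField : NumberField (Qcyc n) :=
  IsCyclotomicExtension.numberField {n} ℚ _

/- For `m % 4 = 2` the field `ℚ(ζ_m)` is `ℚ(ζ_{m / 2})`. -/
theorem dvd_of_le {m : ℕ} (hm : m ≠ 0) (hm4 : m % 4 ≠ 2) (h : Qcyc m ≤ Qcyc n) : m ∣ n := by
  have : NeZero m := ⟨hm⟩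
  obtain ⟨ζ, hζ, -⟩ := exists_isPrimitiveRoot_of_le hm h
  have hdvd := NumberField.Units.dvd_torsionOrder_of_isPrimitiveRoot hζ
  rw [IsCyclotomicExtension.Rat.torsionOrder_eq (n := n)] at hdvd
  split_ifs at hdvd with hn
  · exact hdvd
  · rcases Nat.even_or_odd m with heven | hodd
    · have h4 : 4 ∣ 2 * n := (show 4 ∣ m by grind).trans hdvd
      grind
    · exact (Nat.coprime_two_right.mpr hodd).dvd_of_dvd_mul_left hdvd

theorem galEquivZMod_modEq_one {d : ℕ} (hd : d ∣ n) (σ : Gal(Qcyc n/ℚ))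
    (hσ : ∀ x : Qcyc n, (x : ℂ) ∈ Qcyc d → σ x = x) :
    (galEquivZMod n (Qcyc n) σ).val.val ≡ 1 [MOD d] := by
  have hd0 : d ≠ 0 := ne_zero_of_dvd_ne_zero (NeZero.ne n) hd
  obtain ⟨ζ, hζ, hζd⟩ := exists_isPrimitiveRoot_of_le hd0 (mono hd)
  have hζn : ζ ^ n = 1 := (hζ.pow_eq_one_iff_dvd n).mpr hd
  have hpow : ζ ^ (galEquivZMod n (Qcyc n) σ).val.val = ζ ^ 1 := by
    rw [pow_one, ← galEquivZMod_apply_of_pow_eq n (Qcyc n) σ hζn, hσ ζ hζd]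
  rwa [(hζ.isOfFinOrder hd0).pow_eq_pow_iff_modEq, ← hζ.eq_orderOf] at hpow

theorem eq_one_of_galEquivZMod_modEq_one (σ : Gal(Qcyc n/ℚ))
    (h : (galEquivZMod n (Qcyc n) σ).val.val ≡ 1 [MOD n]) : σ = 1 := by
  rw [← (galEquivZMod n (Qcyc n)).map_eq_one_iff, Units.ext_iff]
  simpa using (ZMod.natCast_eq_natCast_iff _ _ _).mpr h

end Qcyc

section Conductor

theorem condF_le {n : ℕ} (hn : n ≠ 0) {F : IntermediateField ℚ ℂ} (h : F ≤ Qcyc n) :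
    condF F ≤ n :=
  Nat.sInf_le ⟨Nat.pos_of_ne_zero hn, h⟩

theorem condF_Qcyc {n : ℕ} (hn : n ≠ 0) (hn4 : n % 4 ≠ 2) : condF (Qcyc n) = n := by
  refine (condF_le hn le_rfl).antisymm (le_csInf ⟨n, Nat.pos_of_ne_zero hn, le_rfl⟩ ?_)
  rintro m ⟨hm, hle⟩
  have : NeZero m := ⟨hm.ne'⟩
  exact Nat.le_of_dvd hm (Qcyc.dvd_of_le hn hn4 hle)

variable {p : ℕ} [hp : Fact p.Prime]

theorem padicValNat_condF_Qcyc_prime_pow {k : ℕ} (hk : 2 ≤ k) :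
    padicValNat p (condF (Qcyc (p ^ k))) = k := by
  rw [condF_Qcyc (pow_ne_zero k hp.out.ne_zero), padicValNat.prime_pow]
  intro h4
  have h2 : 2 ∣ p ^ k := by omega
  obtain rfl : 2 = p := (Nat.prime_dvd_prime_iff_eq Nat.prime_two hp.out).mp
    (Nat.prime_two.dvd_of_dvd_pow h2)
  have : 2 ^ 2 ∣ 2 ^ k := pow_dvd_pow 2 hk
  omega

theorem padicValNat_condF_Qcyc_prime_pow_le (k : ℕ) :
    padicValNat p (condF (Qcyc (p ^ k))) ≤ k :=
  calc padicValNat p (condF (Qcyc (p ^ k))) ≤ Nat.log p (condF (Qcyc (p ^ k))) :=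
        padicValNat_le_nat_log _
    _ ≤ Nat.log p (p ^ k) := Nat.log_mono_right (condF_le (pow_ne_zero k hp.out.ne_zero) le_rfl)
    _ = k := Nat.log_pow hp.out.one_lt k

theorem padicValNat_condF_Qcyc_prime_pow_eq_iff {k α : ℕ} (hα : 2 ≤ α) :
    padicValNat p (condF (Qcyc (p ^ k))) = α ↔ k = α := by
  refine ⟨fun h => ?_, fun h => h ▸ padicValNat_condF_Qcyc_prime_pow (h ▸ hα)⟩
  have hk : 2 ≤ k := hα.trans (h ▸ padicValNat_condF_Qcyc_prime_pow_le k)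
  rwa [padicValNat_condF_Qcyc_prime_pow hk] at h

end Conductor

theorem mem_Qfield {X : Type*} (ψ : X → ℂ) (x : X) : ψ x ∈ Qfield ψ :=
  IntermediateField.subset_adjoin _ _ (Set.mem_range_self x)

/-- The `p`-rationality level of `ψ`: the `p`-adic valuation of the conductor of its field of
values, written `lev_p(ψ)` in the literature. -/
noncomputable def pLevel (p : ℕ) {X : Type*} (ψ : X → ℂ) : ℕ :=
  padicValNat p (condF (Qfield ψ))

section LinearCharacters

theorem apply_pow_orderOf {M : Type*} [Monoid M] (θ : M →* ℂˣ) (x : M) :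
    (θ x : ℂ) ^ orderOf θ = 1 := by
  rw [← Units.val_pow_eq_pow_val, ← MonoidHom.pow_apply, pow_orderOf_eq_one, MonoidHom.one_apply,
    Units.val_one]

variable {H : Type*} [Group H] [Finite H]

theorem exists_orderOf_apply_eq (θ : H →* ℂˣ) : ∃ h, orderOf (θ h) = orderOf θ := by
  have : Finite θ.range := Set.finite_range θ
  obtain ⟨⟨_, h, rfl⟩, hgen⟩ := IsCyclic.exists_generator (α := θ.range)
  refine ⟨h, Nat.dvd_antisymm (orderOf_dvd_of_pow_eq_one ?_) (orderOf_dvd_of_pow_eq_one ?_)⟩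
  · rw [← MonoidHom.pow_apply, pow_orderOf_eq_one, MonoidHom.one_apply]
  · ext x
    obtain ⟨i, hi⟩ := Subgroup.mem_zpowers_iff.mp (hgen ⟨θ x, x, rfl⟩)
    have hi : θ h ^ i = θ x := congrArg Subtype.val hi
    rw [MonoidHom.pow_apply, ← hi, ← zpow_natCast, zpow_comm, zpow_natCast, pow_orderOf_eq_one,
      one_zpow, MonoidHom.one_apply]

theorem Qfield_eq_Qcyc_orderOf (θ : H →* ℂˣ) :
    Qfield (fun h => (θ h : ℂ)) = Qcyc (orderOf θ) := by
  obtain ⟨h, hh⟩ := exists_orderOf_apply_eq θ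
  have : NeZero (orderOf θ) := ⟨hh ▸ (θ.isOfFinOrder (isOfFinOrder_of_finite h)).orderOf_pos.ne'⟩
  have hprim : IsPrimitiveRoot (θ h : ℂ) (orderOf θ) :=
    IsPrimitiveRoot.coe_units_iff.mpr (hh ▸ IsPrimitiveRoot.orderOf (θ h))
  refine le_antisymm (IntermediateField.adjoin_le_iff.mpr ?_) ?_
  · rintro _ ⟨x, rfl⟩
    exact Qcyc.mem_of_pow_eq_one (apply_pow_orderOf θ x)
  · rw [Qcyc.eq_adjoin_of_isPrimitiveRoot hprim, IntermediateField.adjoin_simple_le_iff]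
    exact mem_Qfield (fun h => (θ h : ℂ)) h

theorem exists_orderOf_eq_prime_pow {p : ℕ} [hp : Fact p.Prime] (hH : IsPGroup p H)
    (θ : H →* ℂˣ) : ∃ k, orderOf θ = p ^ k := by
  obtain ⟨h, hh⟩ := exists_orderOf_apply_eq θ
  obtain ⟨n, hn⟩ := IsPGroup.iff_orderOf.mp hH h
  obtain ⟨k, -, hk⟩ := (Nat.dvd_prime_pow hp.out).mp (hn ▸ hh ▸ orderOf_map_dvd θ h)
  exact ⟨k, hk⟩

theorem pLevel_eq_iff_orderOf_eq {p : ℕ} [hp : Fact p.Prime] (hH : IsPGroup p H) {α : ℕ}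
    (hα : 2 ≤ α) (θ : H →* ℂˣ) :
    pLevel p (fun h => (θ h : ℂ)) = α ↔ orderOf θ = p ^ α := by
  obtain ⟨k, hk⟩ := exists_orderOf_eq_prime_pow hH θ
  rw [pLevel, Qfield_eq_Qcyc_orderOf, hk, padicValNat_condF_Qcyc_prime_pow_eq_iff hα,
    Nat.pow_right_inj hp.out.two_le]

end LinearCharacters

section InnerProduct

variable {H : Type*} [Group H] [Fintype H]

theorem innerChar_eq_sum_map_inv (ψ : H → ℂ) (θ : H →* ℂˣ) :
    innerChar ψ (fun h => (θ h : ℂ)) = (Fintype.card H : ℂ)⁻¹ * ∑ h, ψ h * θ h⁻¹ := by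
  rw [innerChar]
  congr! 3 with h
  have hfin : IsOfFinOrder (θ h : ℂ) :=
    (Units.coeHom ℂ).isOfFinOrder (θ.isOfFinOrder (isOfFinOrder_of_finite h))
  rw [← Complex.inv_eq_conj hfin.norm_eq_one, map_inv, Units.val_inv_eq_inv_val]

theorem innerChar_pow_eq_zero_iff {L : Type*} [Field L] [Algebra L ℂ] (σ : L →+* L) {a b : H → L}
    {m : ℕ} (ha : ∀ h, σ (a h) = a h) (hb : ∀ h, σ (b h) = b h ^ m) {θ : H →* ℂˣ}
    (hθ : ∀ h, algebraMap L ℂ (b h) = θ h) :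
    innerChar (fun h => algebraMap L ℂ (a h)) (fun h => ((θ ^ m) h : ℂ)) = 0 ↔
      innerChar (fun h => algebraMap L ℂ (a h)) (fun h => (θ h : ℂ)) = 0 := by
  have hsum : ∑ h, algebraMap L ℂ (a h) * θ h⁻¹ = algebraMap L ℂ (∑ h, a h * b h⁻¹) := by
    simp only [map_sum, map_mul, hθ]
  have hsum_pow : ∑ h, algebraMap L ℂ (a h) * (θ ^ m) h⁻¹ =
      algebraMap L ℂ (σ (∑ h, a h * b h⁻¹)) := by
    simp only [map_sum, map_mul, map_pow, ha, hb, hθ, MonoidHom.pow_apply,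
      Units.val_pow_eq_pow_val]
  have hcard : (Fintype.card H : ℂ)⁻¹ ≠ 0 := inv_ne_zero (Nat.cast_ne_zero.mpr Fintype.card_ne_zero)
  rw [innerChar_eq_sum_map_inv, innerChar_eq_sum_map_inv, hsum, hsum_pow]
  simp only [mul_eq_zero, hcard, false_or, map_eq_zero]

end InnerProduct

/-- The linear constituents of `ψ` of `p`-rationality level `α`, as a subset of the group of linear
characters; `θ` is a constituent of `ψ` when their inner product is nonzero. -/
def levelConstituents {H : Type*} [Group H] [Fintype H] (p : ℕ) (ψ : H → ℂ) (α : ℕ) :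
    Set (H →* ℂˣ) :=
  {θ | innerChar ψ (fun h => (θ h : ℂ)) ≠ 0 ∧ pLevel p (fun h => (θ h : ℂ)) = α}

namespace levelConstituents

variable {H : Type*} [Group H] [Fintype H] {p : ℕ} [hp : Fact p.Prime] {ψ : H → ℂ} {α : ℕ}

theorem orderOf_eq_of_mem (hH : IsPGroup p H) (hα : 2 ≤ α) {θ : H →* ℂˣ}
    (hθ : θ ∈ levelConstituents p ψ α) : orderOf θ = p ^ α :=
  (pLevel_eq_iff_orderOf_eq hH hα θ).mp hθ.2

theorem pow_mem (hH : IsPGroup p H) (hα : 2 ≤ α) (hψ : Qfield ψ ≤ Qcyc (p ^ α))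
    {σ : Gal(Qcyc (p ^ α)/ℚ)} (hσ : ∀ x : Qcyc (p ^ α), (x : ℂ) ∈ Qfield ψ → σ x = x)
    {θ : H →* ℂˣ} (hθ : θ ∈ levelConstituents p ψ α) :
    θ ^ (galEquivZMod (p ^ α) (Qcyc (p ^ α)) σ).val.val ∈ levelConstituents p ψ α := by
  have horder : orderOf θ = p ^ α := orderOf_eq_of_mem hH hα hθ
  have hroot (h : H) : (θ h : ℂ) ^ p ^ α = 1 := horder ▸ apply_pow_orderOf θ h
  let a (h : H) : Qcyc (p ^ α) := ⟨ψ h, hψ (mem_Qfield ψ h)⟩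
  let b (h : H) : Qcyc (p ^ α) := ⟨θ h, Qcyc.mem_of_pow_eq_one (hroot h)⟩
  have hb (h : H) : σ (b h) = b h ^ (galEquivZMod (p ^ α) (Qcyc (p ^ α)) σ).val.val :=
    galEquivZMod_apply_of_pow_eq (p ^ α) _ σ (Subtype.ext (hroot h))
  refine ⟨(innerChar_pow_eq_zero_iff (σ : Qcyc (p ^ α) →+* Qcyc (p ^ α)) (a := a)
    (fun h => hσ _ (mem_Qfield ψ h)) hb fun _ => rfl).not.mpr hθ.1, ?_⟩
  have hcoprime := ZMod.val_coe_unit_coprime (galEquivZMod (p ^ α) (Qcyc (p ^ α)) σ)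
  rw [pLevel_eq_iff_orderOf_eq hH hα, Nat.Coprime.orderOf_pow (by rw [horder]; exact hcoprime.symm),
    horder]

theorem gal_eq_one_of_forall_fixing (hH : IsPGroup p H) (hα : 2 ≤ α) (hψ : Qfield ψ ≤ Qcyc (p ^ α))
    (hcard : ¬ p ∣ Nat.card (levelConstituents p ψ α)) {σ : Gal(Qcyc (p ^ α)/ℚ)}
    (hσ : ∀ x : Qcyc (p ^ α), (x : ℂ) ∈ Qcyc p ⊔ Qfield ψ → σ x = x) : σ = 1 := by
  have hσp := Qcyc.galEquivZMod_modEq_one (dvd_pow_self p (by omega)) σ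
    fun x hx => hσ x ((le_sup_left : Qcyc p ≤ Qcyc p ⊔ Qfield ψ) hx)
  have hσψ (x : Qcyc (p ^ α)) (hx : (x : ℂ) ∈ Qfield ψ) : σ x = x :=
    hσ x ((le_sup_right : Qfield ψ ≤ Qcyc p ⊔ Qfield ψ) hx)
  exact Qcyc.eq_one_of_galEquivZMod_modEq_one σ <|
    modEq_one_of_pow_mem (A := H →* ℂˣ) (S := levelConstituents p ψ α)
      (fun _ hθ => orderOf_eq_of_mem hH hα hθ)
      (fun _ hθ => pow_mem hH hα hψ hσψ hθ) hcard hσp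

end levelConstituents

theorem stmt14_general {H : Type*} [Group H] [Fintype H] {p : ℕ} (hp : p.Prime)
    (hH : IsPGroup p H) (ψ : H → ℂ) {α : ℕ} (hsub : Qcyc p ⊔ Qfield ψ ≤ Qcyc (p ^ α))
    (hcard : ¬ p ∣ Nat.card (levelConstituents p ψ α)) :
    Qcyc (p ^ α) = Qcyc p ⊔ Qfield ψ := by
  have : Fact p.Prime := ⟨hp⟩
  refine le_antisymm ?_ hsub
  rcases Nat.lt_or_ge α 2 with hα | hα
  · exact (Qcyc.mono (by simpa using pow_dvd_pow p (Nat.le_of_lt_succ hα))).trans le_sup_left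
  · have : IsGalois ℚ (Qcyc (p ^ α)) := IsCyclotomicExtension.isGalois {p ^ α} ℚ _
    intro x hx
    exact algebraMap_mem_of_forall_fixing
      (fun _ hσ => levelConstituents.gal_eq_one_of_forall_fixing hH hα
        (le_sup_right.trans hsub) hcard hσ)
      (⟨x, hx⟩ : Qcyc (p ^ α))

theorem stmt14 {G : Type*} [Group G] [Fintype G] (p : ℕ) (hp : p.Prime)
    (P : Sylow p G) (χ : G → ℂ) (d : ℕ) (hχ : IsIrrCharOfDeg G χ d) (hd : ¬ p ∣ d)
    (α : ℕ) (hα : α = padicValNat p (condF (Qfield χ))) (h2 : 2 ≤ α)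
    (hsub : Qcyc p ⊔ Qfield (fun x : ↥(P : Subgroup G) => χ (x : G)) ≤ Qcyc (p ^ α))
    (hnum : ¬ p ∣ Nat.card {lam : ↥(P : Subgroup G) →* ℂˣ //
      innerChar (fun x : ↥(P : Subgroup G) => χ (x : G))
          (fun x => ((lam x : ℂˣ) : ℂ)) ≠ 0 ∧
        padicValNat p (condF (Qfield (fun x : ↥(P : Subgroup G) => ((lam x : ℂˣ) : ℂ)))) = α}) :
    Qcyc (p ^ α) = Qcyc p ⊔ Qfield (fun x : ↥(P : Subgroup G) => χ (x : G)) :=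
  stmt14_general hp P.2 _ hsub hnum
end
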